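/- (Freedom in the choice of the singular part.) Assume Hypothesis (H), and let T : H → H be any bounded linear operator. Then for every ε ∈ (0, 1/(2 C_R ‖M‖)), the operator B_ε := M + ε⁻¹ A (with domain dom(A)) is boundedly invertible and ‖ B_ε⁻¹ − ( ι_N B_{ε,N}⁻¹ ι_N* + ε π_R T π_R ) ‖ ≤ ( 2 C_R (1 + ‖M‖/c)² + ‖ι_R* T ι_R‖ ) ε. -/

import Mathlib

/-!
Coercivity of `M` and skew-selfadjointness of `A` make `B = M + A` closed and bounded below with
trivial cokernel, hence boundedly invertible with `‖B⁻¹‖ ≤ 1/c`; the same applies to the compression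
`B_N` of `B` to `N`. Solving `B x = y` block by block along `H = N ⊕ R`, with `D = ι_N B_N⁻¹ ι_N*`
and `J` the inverse of the compression of `A` to `R`, gives
`B⁻¹ - D = (1 - D M) (ι_R J ι_R*) (1 - M B⁻¹)`.
The two outer factors have norm at most `1 + ‖M‖/c`. Replacing `A` by `ε⁻¹ A` turns `J` into `ε J`.
-/

section BoundedInverse

variable {𝕜 E F : Type*} [NontriviallyNormedField 𝕜] [NormedAddCommGroup E] [NormedSpace 𝕜 E]
  [NormedAddCommGroup F] [NormedSpace 𝕜 F]

/-- The bounded operator `S` is a two-sided inverse of the partially defined operator `B`. The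
identity `B (S y) = y` is encoded as surjectivity of `B`, which avoids mentioning the membership
`S y ∈ B.domain`. -/
structure IsBoundedInverse (S : F →L[𝕜] E) (B : E →ₗ.[𝕜] F) : Prop where
  apply_apply : ∀ x : B.domain, S (B x) = x
  surjective : ∀ y : F, ∃ x : B.domain, B x = y

theorem isClosed_continuousLinearMap_vadd (M : E →L[𝕜] F) {A : E →ₗ.[𝕜] F} (hA : A.IsClosed) :
    ((M : E →ₗ[𝕜] F) +ᵥ A).IsClosed := by
  have hgraph : (((M : E →ₗ[𝕜] F) +ᵥ A).graph : Set (E × F)) =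
      (fun p => (p.1, p.2 - M p.1)) ⁻¹' A.graph := by
    ext ⟨x, y⟩
    simp only [SetLike.mem_coe, Set.mem_preimage, LinearPMap.mem_graph_iff]
    exact exists_congr fun a => and_congr_right fun ha => by
      rw [LinearPMap.vadd_apply, ContinuousLinearMap.coe_coe, ← ha, eq_sub_iff_add_eq']
  rw [LinearPMap.IsClosed, hgraph]
  exact IsClosed.preimage (by fun_prop) hA

theorem isClosed_range_of_bounded_below [CompleteSpace E] [CompleteSpace F] {B : E →ₗ.[𝕜] F}
    (hB : B.IsClosed) {c : ℝ} (hc : 0 < c) (hbelow : ∀ x : B.domain, c * ‖(x : E)‖ ≤ ‖B x‖) :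
    IsClosed (Set.range B) := by
  have : CompleteSpace B.graph := IsClosed.completeSpace_coe (hs := hB)
  let sndGraph : B.graph →L[𝕜] F := (ContinuousLinearMap.snd 𝕜 E F).comp B.graph.subtypeL
  have hanti : AntilipschitzWith (max c⁻¹ 1).toNNReal sndGraph := by
    refine sndGraph.antilipschitz_of_bound fun ⟨p, hp⟩ => ?_
    obtain ⟨x, hx, hy⟩ := (LinearPMap.mem_graph_iff B).1 hp
    have hfst : ‖p.1‖ ≤ c⁻¹ * ‖p.2‖ := by
      rw [← hx, ← hy, le_inv_mul_iff₀ hc]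
      exact hbelow x
    rw [Real.coe_toNNReal _ (by positivity)]
    refine max_le (hfst.trans ?_) ?_
    · exact mul_le_mul_of_nonneg_right (le_max_left _ _) (norm_nonneg _)
    · exact le_mul_of_one_le_left (norm_nonneg _) (le_max_right _ _)
  have hrange : Set.range sndGraph = Set.range B := by
    ext y
    rw [LinearPMap.mem_range_iff]
    exact ⟨fun ⟨p, hp⟩ => ⟨p.1.1, hp ▸ p.2⟩, fun ⟨x, hx⟩ => ⟨⟨(x, y), hx⟩, rfl⟩⟩
  exact hrange ▸ hanti.isClosed_range sndGraph.uniformContinuous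

theorem exists_isBoundedInverse_of_bounded_below {B : E →ₗ.[𝕜] F} {c : ℝ} (hc : 0 < c)
    (hbelow : ∀ x : B.domain, c * ‖(x : E)‖ ≤ ‖B x‖) (hsurj : ∀ y : F, ∃ x : B.domain, B x = y) :
    ∃ S : F →L[𝕜] E, IsBoundedInverse S B ∧ ‖S‖ ≤ c⁻¹ := by
  have hinj : Function.Injective B.toFun := by
    refine (injective_iff_map_eq_zero _).2 fun x hx => ?_
    have hx' : c * ‖(x : E)‖ ≤ 0 := (hbelow x).trans_eq (norm_eq_zero.2 hx)
    exact Subtype.ext (norm_le_zero_iff.1 (nonpos_of_mul_nonpos_right hx' hc))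
  let e : B.domain ≃ₗ[𝕜] F := LinearEquiv.ofBijective B.toFun ⟨hinj, hsurj⟩
  have hbound : ∀ y, ‖(B.domain.subtype ∘ₗ e.symm.toLinearMap) y‖ ≤ c⁻¹ * ‖y‖ := by
    intro y
    rw [le_inv_mul_iff₀ hc]
    exact (hbelow (e.symm y)).trans_eq (congrArg norm (e.apply_symm_apply y))
  exact ⟨(B.domain.subtype ∘ₗ e.symm.toLinearMap).mkContinuous c⁻¹ hbound,
    ⟨fun x => congrArg Subtype.val (e.symm_apply_apply x), hsurj⟩,
    LinearMap.mkContinuous_norm_le _ (inv_nonneg.2 hc.le) hbound⟩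

end BoundedInverse

section SkewSelfAdjoint

variable {𝕜 H : Type*} [RCLike 𝕜] [NormedAddCommGroup H] [InnerProductSpace 𝕜 H]

theorem mul_norm_le_norm_of_mul_sq_le_re_inner {c : ℝ} {x y : H}
    (h : c * ‖x‖ ^ 2 ≤ RCLike.re (inner 𝕜 y x)) : c * ‖x‖ ≤ ‖y‖ := by
  rcases (norm_nonneg x).eq_or_lt with hx | hx
  · simp [← hx]
  · refine le_of_mul_le_mul_right ?_ hx
    calc c * ‖x‖ * ‖x‖ = c * ‖x‖ ^ 2 := by ring
      _ ≤ RCLike.re (inner 𝕜 y x) := h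
      _ ≤ ‖y‖ * ‖x‖ := re_inner_le_norm y x

theorem mem_neg_graph_iff {R E F : Type*} [Ring R] [AddCommGroup E] [Module R E] [AddCommGroup F]
    [Module R F] {A : E →ₗ.[R] F} {x : E} {z : F} :
    (x, z) ∈ (-A).graph ↔ (x, -z) ∈ A.graph := by
  simp only [LinearPMap.mem_graph_iff]
  exact exists_congr fun a => and_congr_right fun _ => neg_eq_iff_eq_neg

variable [CompleteSpace H]

/-- A densely defined operator `A` with `A* = -A`. Density is required separately because
`LinearPMap.adjoint` takes a junk value on operators that are not densely defined. -/
structure IsSkewSelfAdjoint (A : H →ₗ.[𝕜] H) : Prop where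
  dense_domain : Dense (A.domain : Set H)
  adjoint_eq_neg : A.adjoint = -A

theorem mem_adjoint_graph_iff {A : H →ₗ.[𝕜] H} (hA : Dense (A.domain : Set H)) {x z : H} :
    (x, z) ∈ A.adjoint.graph ↔ ∀ a : A.domain, inner 𝕜 z (a : H) = inner 𝕜 x (A a) := by
  rw [LinearPMap.mem_graph_iff]
  constructor
  · rintro ⟨y, rfl, rfl⟩ a
    exact LinearPMap.adjoint_isFormalAdjoint hA y a
  · intro h
    exact ⟨⟨x, LinearPMap.mem_adjoint_domain_of_exists x ⟨z, h⟩⟩, rfl,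
      LinearPMap.adjoint_apply_eq hA _ h⟩

theorem isSkewSelfAdjoint_iff_mem_graph {A : H →ₗ.[𝕜] H} (hA : Dense (A.domain : Set H)) :
    IsSkewSelfAdjoint A ↔ ∀ x z : H,
      (x, z) ∈ A.graph ↔ ∀ a : A.domain, inner 𝕜 z (a : H) = -inner 𝕜 x (A a) := by
  have hgraph : ∀ x z : H, (x, -z) ∈ A.adjoint.graph ↔
      ∀ a : A.domain, inner 𝕜 z (a : H) = -inner 𝕜 x (A a) := fun x z => by
    simp only [mem_adjoint_graph_iff hA, inner_neg_left, neg_eq_iff_eq_neg]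
  simp only [← hgraph]
  constructor
  · intro h x z
    rw [h.adjoint_eq_neg, mem_neg_graph_iff, neg_neg]
  · refine fun h => ⟨hA, LinearPMap.eq_of_eq_graph (Submodule.ext fun ⟨x, z⟩ => ?_)⟩
    rw [mem_neg_graph_iff, h, neg_neg]

namespace IsSkewSelfAdjoint

variable {A : H →ₗ.[𝕜] H}

theorem mem_graph_iff (hA : IsSkewSelfAdjoint A) {x z : H} :
    (x, z) ∈ A.graph ↔ ∀ a : A.domain, inner 𝕜 z (a : H) = -inner 𝕜 x (A a) :=
  (isSkewSelfAdjoint_iff_mem_graph hA.dense_domain).1 hA x z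

theorem inner_apply_left (hA : IsSkewSelfAdjoint A) (x y : A.domain) :
    inner 𝕜 (A x) (y : H) = -inner 𝕜 (x : H) (A y) :=
  hA.mem_graph_iff.1 (A.mem_graph x) y

theorem re_inner_apply_self (hA : IsSkewSelfAdjoint A) (x : A.domain) :
    RCLike.re (inner 𝕜 (A x) (x : H)) = 0 := by
  have h := congrArg RCLike.re (hA.inner_apply_left x x)
  rw [map_neg, inner_re_symm (x : H)] at h
  linarith

theorem isClosed (hA : IsSkewSelfAdjoint A) : A.IsClosed := by
  have hgraph : (A.graph : Set (H × H)) = (fun p => (p.1, -p.2)) ⁻¹' A.adjoint.graph := by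
    ext ⟨x, z⟩
    rw [Set.mem_preimage, SetLike.mem_coe, SetLike.mem_coe, hA.adjoint_eq_neg, mem_neg_graph_iff,
      neg_neg]
  rw [LinearPMap.IsClosed, hgraph]
  exact IsClosed.preimage (by fun_prop) (LinearPMap.adjoint_isClosed hA.dense_domain)

theorem real_smul [NormedSpace ℝ H] [IsScalarTower ℝ 𝕜 H] (hA : IsSkewSelfAdjoint A) {r : ℝ}
    (hr : r ≠ 0) : IsSkewSelfAdjoint (r • A) := by
  refine (isSkewSelfAdjoint_iff_mem_graph (A := r • A) hA.dense_domain).2 fun x z => ?_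
  have hgraph : (x, z) ∈ (r • A).graph ↔ (x, r⁻¹ • z) ∈ A.graph := by
    simp only [LinearPMap.mem_graph_iff]
    exact exists_congr fun a => and_congr_right fun _ => (eq_inv_smul_iff₀ hr).symm
  rw [hgraph, hA.mem_graph_iff]
  refine forall_congr' fun a => ?_
  rw [LinearPMap.smul_apply, RCLike.real_smul_eq_coe_smul (K := 𝕜),
    RCLike.real_smul_eq_coe_smul (K := 𝕜) r, inner_smul_real_left, inner_smul_real_right,
    inv_smul_eq_iff₀ hr, smul_neg]

variable {M : H →L[𝕜] H} {c : ℝ}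

theorem mul_sq_norm_le_re_inner_vadd (hA : IsSkewSelfAdjoint A)
    (hM : ∀ x : H, c * ‖x‖ ^ 2 ≤ RCLike.re (inner 𝕜 (M x) x)) (x : A.domain) :
    c * ‖(x : H)‖ ^ 2 ≤ RCLike.re (inner 𝕜 (((M : H →ₗ[𝕜] H) +ᵥ A) x) (x : H)) := by
  rw [LinearPMap.vadd_apply, inner_add_left, map_add, hA.re_inner_apply_self, add_zero]
  exact hM x

theorem orthogonal_range_vadd_eq_bot (hA : IsSkewSelfAdjoint A) (hc : 0 < c)
    (hM : ∀ x : H, c * ‖x‖ ^ 2 ≤ RCLike.re (inner 𝕜 (M x) x)) :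
    (LinearMap.range ((M : H →ₗ[𝕜] H) +ᵥ A).toFun)ᗮ = ⊥ := by
  refine (Submodule.eq_bot_iff _).2 fun y hy => ?_
  have horth : ∀ a : A.domain, inner 𝕜 y (M a + A a) = 0 := fun a =>
    Submodule.inner_left_of_mem_orthogonal (LinearMap.mem_range_self _ a) hy
  -- `y` is orthogonal to the range iff `y` is in the domain of `A* = -A` and `A y = M* y`.
  have hgraph : (y, M.adjoint y) ∈ A.graph := hA.mem_graph_iff.2 fun a => by
    rw [ContinuousLinearMap.adjoint_inner_left, ← add_eq_zero_iff_eq_neg, ← inner_add_right]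
    exact horth a
  obtain ⟨x, rfl : (x : H) = y, -⟩ := (LinearPMap.mem_graph_iff A).1 hgraph
  have hcoer := hA.mul_sq_norm_le_re_inner_vadd hM x
  rw [inner_re_symm, LinearPMap.vadd_apply, ContinuousLinearMap.coe_coe, horth x, map_zero] at hcoer
  exact norm_eq_zero.1 (pow_eq_zero_iff two_ne_zero |>.1
    ((nonpos_of_mul_nonpos_right hcoer hc).antisymm (sq_nonneg _)))

theorem exists_isBoundedInverse_vadd (hA : IsSkewSelfAdjoint A) (hc : 0 < c)
    (hM : ∀ x : H, c * ‖x‖ ^ 2 ≤ RCLike.re (inner 𝕜 (M x) x)) :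
    ∃ S : H →L[𝕜] H, IsBoundedInverse S ((M : H →ₗ[𝕜] H) +ᵥ A) ∧ ‖S‖ ≤ c⁻¹ := by
  set B := (M : H →ₗ[𝕜] H) +ᵥ A
  have hbelow : ∀ x : B.domain, c * ‖(x : H)‖ ≤ ‖B x‖ := fun x =>
    mul_norm_le_norm_of_mul_sq_le_re_inner (hA.mul_sq_norm_le_re_inner_vadd hM x)
  have hclosed : IsClosed (Set.range B) :=
    isClosed_range_of_bounded_below (isClosed_continuousLinearMap_vadd M hA.isClosed) hc hbelow
  have hdense : Dense (Set.range B) := by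
    have := Submodule.topologicalClosure_eq_top_iff.2 (hA.orthogonal_range_vadd_eq_bot hc hM)
    exact Submodule.dense_iff_topologicalClosure_eq_top.2 this
  have hsurj : Set.range B = Set.univ := hclosed.closure_eq ▸ hdense.closure_eq
  exact exists_isBoundedInverse_of_bounded_below hc hbelow (Set.range_eq_univ.1 hsurj)

end IsSkewSelfAdjoint

end SkewSelfAdjoint

section Reduction

variable {𝕜 H : Type*} [RCLike 𝕜] [NormedAddCommGroup H] [InnerProductSpace 𝕜 H]

/-- The compression `ι_K* A ι_K` of a partially defined operator to the subspace `K`, with domain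
`A.domain ∩ K`. -/
noncomputable def compression (A : H →ₗ.[𝕜] H) (K : Submodule 𝕜 H) [K.HasOrthogonalProjection] :
    K →ₗ.[𝕜] K where
  domain := A.domain.comap K.subtype
  toFun := K.orthogonalProjectionOnto.toLinearMap ∘ₗ A.toFun ∘ₗ
    (K.subtype.restrict fun _ hx => hx)

theorem compression_apply (A : H →ₗ.[𝕜] H) (K : Submodule 𝕜 H) [K.HasOrthogonalProjection]
    (x : (compression A K).domain) :
    compression A K x = K.orthogonalProjectionOnto (A ⟨((x : K) : H), x.2⟩) :=
  rfl

theorem compression_real_smul [NormedSpace ℝ H] [IsScalarTower ℝ 𝕜 H] (A : H →ₗ.[𝕜] H)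
    (K : Submodule 𝕜 H) [K.HasOrthogonalProjection] (r : ℝ) :
    compression (r • A) K = r • compression A K := by
  refine LinearPMap.ext rfl fun x hx _ => ?_
  rw [LinearPMap.smul_apply, compression_apply, compression_apply, LinearPMap.smul_apply,
    RCLike.real_smul_eq_coe_smul (K := 𝕜), map_smul, RCLike.real_smul_eq_coe_smul (K := 𝕜)]

theorem mul_sq_norm_le_re_inner_compression {M : H →L[𝕜] H} {c : ℝ}
    (hM : ∀ x : H, c * ‖x‖ ^ 2 ≤ RCLike.re (inner 𝕜 (M x) x)) (K : Submodule 𝕜 H)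
    [K.HasOrthogonalProjection] (x : K) :
    c * ‖x‖ ^ 2 ≤
      RCLike.re (inner 𝕜 ((K.orthogonalProjectionOnto ∘L M ∘L K.subtypeL) x) x) := by
  rw [ContinuousLinearMap.comp_apply, Submodule.inner_orthogonalProjectionOnto_eq_of_mem_right]
  exact hM x

theorem norm_subtypeL_comp_comp_orthogonalProjectionOnto_le (K : Submodule 𝕜 H)
    [K.HasOrthogonalProjection] (L : K →L[𝕜] K) :
    ‖K.subtypeL ∘L L ∘L K.orthogonalProjectionOnto‖ ≤ ‖L‖ :=
  calc ‖K.subtypeL ∘L L ∘L K.orthogonalProjectionOnto‖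
      = ‖L ∘L K.orthogonalProjectionOnto‖ := K.subtypeₗᵢ.norm_toContinuousLinearMap_comp
    _ ≤ ‖L‖ * ‖K.orthogonalProjectionOnto‖ := L.opNorm_comp_le _
    _ ≤ ‖L‖ := mul_le_of_le_one_right (norm_nonneg L) K.orthogonalProjectionOnto_norm_le

/-- The subspace `K` reduces `A`: the orthogonal projection `π_K` satisfies `π_K A ⊆ A π_K`. -/
def IsReducedBy (A : H →ₗ.[𝕜] H) (K : Submodule 𝕜 H) [K.HasOrthogonalProjection] : Prop :=
  ∀ x : A.domain, ∃ hx : (K.orthogonalProjectionOnto (x : H) : H) ∈ A.domain,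
    (K.orthogonalProjectionOnto (A x) : H) = A ⟨K.orthogonalProjectionOnto (x : H), hx⟩

namespace IsReducedBy

variable {A : H →ₗ.[𝕜] H} {K : Submodule 𝕜 H} [K.HasOrthogonalProjection]

theorem of_orthogonal (hK : IsReducedBy A Kᗮ) : IsReducedBy A K := by
  intro x
  obtain ⟨hmem, happly⟩ := hK x
  have hproj : ∀ z : H, (K.orthogonalProjectionOnto z : H) = z - Kᗮ.orthogonalProjectionOnto z :=
    fun z => eq_sub_of_add_eq (K.starProjection_add_starProjection_orthogonal z)
  refine ⟨hproj x ▸ A.domain.sub_mem x.2 hmem, ?_⟩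
  rw [hproj, happly, ← LinearPMap.map_sub]
  exact congrArg A (Subtype.ext (hproj x).symm)

theorem exists_compression_apply (hK : IsReducedBy A K) (x : A.domain) :
    ∃ u : (compression A K).domain, (u : K) = K.orthogonalProjectionOnto (x : H) ∧
      compression A K u = K.orthogonalProjectionOnto (A x) := by
  obtain ⟨hmem, happly⟩ := hK x
  refine ⟨⟨K.orthogonalProjectionOnto (x : H), hmem⟩, rfl, ?_⟩
  rw [compression_apply, ← happly, Submodule.orthogonalProjectionOnto_mem_subspace_eq_self]

theorem real_smul [NormedSpace ℝ H] [IsScalarTower ℝ 𝕜 H] (hK : IsReducedBy A K) (r : ℝ) :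
    IsReducedBy (r • A) K := by
  intro x
  obtain ⟨hmem, happly⟩ := hK x
  refine ⟨hmem, ?_⟩
  rw [LinearPMap.smul_apply, LinearPMap.smul_apply, ← happly,
    RCLike.real_smul_eq_coe_smul (K := 𝕜), map_smul, Submodule.coe_smul,
    RCLike.real_smul_eq_coe_smul (K := 𝕜)]

theorem dense_compression_domain (hK : IsReducedBy A K) (hA : Dense (A.domain : Set H)) :
    Dense ((compression A K).domain : Set K) := by
  have hsurj : Function.Surjective K.orthogonalProjectionOnto := fun u =>
    ⟨u, Submodule.orthogonalProjectionOnto_mem_subspace_eq_self u⟩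
  refine (hsurj.denseRange.dense_image K.orthogonalProjectionOnto.continuous hA).mono ?_
  rintro _ ⟨x, hx, rfl⟩
  exact (hK ⟨x, hx⟩).1

variable [CompleteSpace H]

theorem isSkewSelfAdjoint_compression [CompleteSpace K] (hK : IsReducedBy A K)
    (hA : IsSkewSelfAdjoint A) : IsSkewSelfAdjoint (compression A K) := by
  refine (isSkewSelfAdjoint_iff_mem_graph (hK.dense_compression_domain hA.dense_domain)).2
    fun x z => ⟨fun hxz a => ?_, fun hxz => ?_⟩
  · obtain ⟨u, rfl, rfl⟩ := (LinearPMap.mem_graph_iff _).1 hxz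
    rw [compression_apply, compression_apply,
      Submodule.inner_orthogonalProjectionOnto_eq_of_mem_right,
      Submodule.inner_orthogonalProjectionOnto_eq_of_mem_left]
    exact hA.inner_apply_left ⟨u, u.2⟩ ⟨a, a.2⟩
  · have hgraph : ((x : H), (z : H)) ∈ A.graph := hA.mem_graph_iff.2 fun a => by
      obtain ⟨u, hu, hAu⟩ := hK.exists_compression_apply a
      have := hxz u
      rwa [hu, hAu, Submodule.inner_orthogonalProjectionOnto_eq_of_mem_left,
        Submodule.inner_orthogonalProjectionOnto_eq_of_mem_left] at this
    obtain ⟨⟨_, hx⟩, rfl, hAx : A ⟨x, hx⟩ = z⟩ := (LinearPMap.mem_graph_iff A).1 hgraph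
    refine (LinearPMap.mem_graph_iff _).2 ⟨⟨x, hx⟩, rfl, ?_⟩
    rw [compression_apply, hAx, Submodule.orthogonalProjectionOnto_mem_subspace_eq_self]

end IsReducedBy

end Reduction

section BlockInverse

variable {𝕜 H : Type*} [RCLike 𝕜] [NormedAddCommGroup H] [InnerProductSpace 𝕜 H]
  {M : H →L[𝕜] H} {A : H →ₗ.[𝕜] H} {N : Submodule 𝕜 H} [N.HasOrthogonalProjection]
  {S : H →L[𝕜] H} {J_N : N →L[𝕜] N} {J : Nᗮ →L[𝕜] Nᗮ}

theorem inverse_sub_compression_inverse_eq (hN : IsReducedBy A Nᗮ)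
    (hS : IsBoundedInverse S ((M : H →ₗ[𝕜] H) +ᵥ A))
    (hJ_N : ∀ u : (compression A N).domain,
      J_N (N.orthogonalProjectionOnto (M ((u : N) : H)) + compression A N u) = u)
    (hJ : ∀ v : (compression A Nᗮ).domain, J (compression A Nᗮ v) = v) :
    S - N.subtypeL ∘L J_N ∘L N.orthogonalProjectionOnto =
      (1 - (N.subtypeL ∘L J_N ∘L N.orthogonalProjectionOnto) ∘L M) ∘L
        (Nᗮ.subtypeL ∘L J ∘L Nᗮ.orthogonalProjectionOnto) ∘L (1 - M ∘L S) := by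
  ext y
  obtain ⟨x, hx⟩ := hS.surjective y
  have hSy : S y = x := by rw [← hx, hS.apply_apply]
  have hAx : A x = y - M x := eq_sub_of_add_eq' hx
  have hdecomp : (x : H) =
      N.orthogonalProjectionOnto (x : H) + Nᗮ.orthogonalProjectionOnto (x : H) :=
    (N.starProjection_add_starProjection_orthogonal (x : H)).symm
  have hR : Nᗮ.orthogonalProjectionOnto (x : H) = J (Nᗮ.orthogonalProjectionOnto (y - M x)) := by
    obtain ⟨v, hv, hAv⟩ := hN.exists_compression_apply x
    rw [← hv, ← hJ v, hAv, hAx]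
  have hNx : N.orthogonalProjectionOnto (x : H) =
      J_N (N.orthogonalProjectionOnto (y - M (Nᗮ.orthogonalProjectionOnto (x : H)))) := by
    obtain ⟨u, hu, hAu⟩ := hN.of_orthogonal.exists_compression_apply x
    have hMx := congrArg M hdecomp
    rw [map_add] at hMx
    rw [← hu, ← hJ_N u, hAu, hAx, hu, ← map_add, hMx]
    congr 2
    abel
  have hNx' := congrArg (N.subtype) hNx
  simp only [map_sub, Submodule.subtype_apply] at hNx'
  simp only [sub_apply, ContinuousLinearMap.comp_apply, one_apply_eq_self,
    Submodule.subtypeL_apply, hSy, ← hR]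
  linear_combination (norm := module) hdecomp + hNx'

theorem norm_inverse_sub_compression_inverse_le (hN : IsReducedBy A Nᗮ)
    (hS : IsBoundedInverse S ((M : H →ₗ[𝕜] H) +ᵥ A))
    (hJ_N : ∀ u : (compression A N).domain,
      J_N (N.orthogonalProjectionOnto (M ((u : N) : H)) + compression A N u) = u)
    (hJ : ∀ v : (compression A Nᗮ).domain, J (compression A Nᗮ v) = v) {d : ℝ}
    (hS_norm : ‖S‖ ≤ d) (hJ_N_norm : ‖J_N‖ ≤ d) :
    ‖S - N.subtypeL ∘L J_N ∘L N.orthogonalProjectionOnto‖ ≤ ‖J‖ * (1 + ‖M‖ * d) ^ 2 := by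
  rw [inverse_sub_compression_inverse_eq hN hS hJ_N hJ]
  have hd : 0 ≤ d := (norm_nonneg S).trans hS_norm
  have norm_one_sub_le : ∀ X : H →L[𝕜] H, ‖X‖ ≤ ‖M‖ * d → ‖1 - X‖ ≤ 1 + ‖M‖ * d := fun X hX =>
    (norm_sub_le _ _).trans (add_le_add ContinuousLinearMap.norm_id_le hX)
  have hleft : ‖1 - (N.subtypeL ∘L J_N ∘L N.orthogonalProjectionOnto) ∘L M‖ ≤ 1 + ‖M‖ * d := by
    refine norm_one_sub_le _ ((ContinuousLinearMap.opNorm_comp_le _ _).trans ?_)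
    rw [mul_comm ‖M‖]
    gcongr
    exact (norm_subtypeL_comp_comp_orthogonalProjectionOnto_le N J_N).trans hJ_N_norm
  have hright : ‖1 - M ∘L S‖ ≤ 1 + ‖M‖ * d :=
    norm_one_sub_le _ ((ContinuousLinearMap.opNorm_comp_le _ _).trans (by gcongr))
  have hmiddle := norm_subtypeL_comp_comp_orthogonalProjectionOnto_le Nᗮ J
  calc _ ≤ (1 + ‖M‖ * d) * (‖J‖ * (1 + ‖M‖ * d)) := by
        refine (ContinuousLinearMap.opNorm_comp_le _ _).trans ?_
        gcongr
        refine (ContinuousLinearMap.opNorm_comp_le _ _).trans ?_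
        gcongr
    _ = ‖J‖ * (1 + ‖M‖ * d) ^ 2 := by ring

end BlockInverse

theorem statement11_general {𝕜 H : Type*} [RCLike 𝕜] [NormedAddCommGroup H]
    [InnerProductSpace 𝕜 H] [NormedSpace ℝ H] [IsScalarTower ℝ 𝕜 H] [CompleteSpace H]
    {M : H →L[𝕜] H} {c : ℝ} (hc : 0 < c)
    (hM : ∀ x : H, c * ‖x‖ ^ 2 ≤ RCLike.re (inner 𝕜 (M x) x))
    {A : H →ₗ.[𝕜] H} (hA : IsSkewSelfAdjoint A)
    {N : Submodule 𝕜 H} [CompleteSpace N] (hN : IsReducedBy A Nᗮ)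
    {J : Nᗮ →L[𝕜] Nᗮ} (hJ : ∀ v : (compression A Nᗮ).domain, J (compression A Nᗮ v) = v)
    (T : H →L[𝕜] H) {ε : ℝ} (hε : 0 < ε) :
    ∃ (S : H →L[𝕜] H) (J_N : N →L[𝕜] N),
      IsBoundedInverse S ((M : H →ₗ[𝕜] H) +ᵥ ε⁻¹ • A) ∧
      IsBoundedInverse J_N
        (((N.orthogonalProjectionOnto ∘L M ∘L N.subtypeL : N →L[𝕜] N) : N →ₗ[𝕜] N) +ᵥ
          ε⁻¹ • compression A N) ∧
      ‖S - (N.subtypeL ∘L J_N ∘L N.orthogonalProjectionOnto +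
          ε • (Nᗮ.subtypeL ∘L Nᗮ.orthogonalProjectionOnto) ∘L
            T ∘L (Nᗮ.subtypeL ∘L Nᗮ.orthogonalProjectionOnto))‖ ≤
        (‖J‖ * (1 + ‖M‖ / c) ^ 2 + ‖Nᗮ.orthogonalProjectionOnto ∘L T ∘L Nᗮ.subtypeL‖) * ε := by
  have hAε := hA.real_smul (inv_ne_zero hε.ne')
  have hNε := hN.real_smul ε⁻¹
  obtain ⟨S, hS, hS_norm⟩ := hAε.exists_isBoundedInverse_vadd hc hM
  obtain ⟨J_N, hJ_N, hJ_N_norm⟩ :=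
    (hNε.of_orthogonal.isSkewSelfAdjoint_compression hAε).exists_isBoundedInverse_vadd hc
      (mul_sq_norm_le_re_inner_compression hM N)
  refine ⟨S, J_N, hS, compression_real_smul A N ε⁻¹ ▸ hJ_N, ?_⟩
  have hεJ : ∀ v : (compression (ε⁻¹ • A) Nᗮ).domain,
      (ε • J) (compression (ε⁻¹ • A) Nᗮ v) = v := by
    rw [compression_real_smul]
    intro v
    rw [LinearPMap.smul_apply, smul_apply, J.map_smul_of_tower, smul_inv_smul₀ hε.ne']
    exact hJ v
  have hreg := norm_inverse_sub_compression_inverse_le hNε hS hJ_N.apply_apply hεJ hS_norm hJ_N_norm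
  have hsing := norm_subtypeL_comp_comp_orthogonalProjectionOnto_le Nᗮ
    (Nᗮ.orthogonalProjectionOnto ∘L T ∘L Nᗮ.subtypeL)
  rw [norm_smul, Real.norm_of_nonneg hε.le, ← div_eq_mul_inv] at hreg
  rw [← sub_sub]
  calc _ ≤ ε * ‖J‖ * (1 + ‖M‖ / c) ^ 2 +
        ε * ‖Nᗮ.orthogonalProjectionOnto ∘L T ∘L Nᗮ.subtypeL‖ := by
        refine (norm_sub_le _ _).trans (add_le_add hreg ?_)
        rw [norm_smul, Real.norm_of_nonneg hε.le]
        exact mul_le_mul_of_nonneg_left hsing hε.le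
    _ = _ := by ring

/-- **Freedom in the choice of the singular part.**
Under Hypothesis (H), for any bounded operator `T : H → H` and every
`ε ∈ (0, 1/(2 C_R ‖M‖))`, the operator `B_ε = M + ε⁻¹ A` is boundedly invertible and
`‖B_ε⁻¹ − (ι_N B_{ε,N}⁻¹ ι_N* + ε π_R T π_R)‖ ≤ (2 C_R (1 + ‖M‖/c)² + ‖ι_R* T ι_R‖) ε`. -/
theorem statement11
    {H : Type*} [NormedAddCommGroup H] [InnerProductSpace ℂ H] [CompleteSpace H]
    -- `M` is a bounded operator with `Re⟪M x, x⟫ ≥ c ‖x‖²`, `c > 0`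
    (M : H →L[ℂ] H) (c : ℝ) (hc : 0 < c)
    (hM : ∀ x : H, c * ‖x‖ ^ 2 ≤ (inner ℂ (M x) x : ℂ).re)
    -- `A` is densely defined and skew-selfadjoint
    (A : H →ₗ.[ℂ] H) (hA_dense : Dense (A.domain : Set H)) (hA_skew : A.adjoint = -A)
    -- `N` is a closed subspace, `R = Nᗮ`
    (N : Submodule ℂ H) [CompleteSpace N]
    (C_R : ℝ) (hC_R : 0 < C_R)
    -- Hypothesis (H)(a): `N ⊆ dom A` and `A π_N` is bounded
    (hHa_sub : N ≤ A.domain)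
    (hHa_bdd : ∃ Ca : ℝ, ∀ x : A.domain, (x : H) ∈ N → ‖A x‖ ≤ Ca * ‖(x : H)‖)
    -- Hypothesis (H)(b): `π_R A ⊆ A π_R`
    (hHb : ∀ x : A.domain,
      ∃ hx : ((Submodule.orthogonalProjectionOnto Nᗮ (x : H) : H)) ∈ A.domain,
        (Submodule.orthogonalProjectionOnto Nᗮ (A x) : H)
          = A ⟨(Submodule.orthogonalProjectionOnto Nᗮ (x : H) : H), hx⟩)
    -- Hypothesis (H)(c): the compression `ι_R* A ι_R`, with domain `dom(A) ∩ R`, is a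
    -- bijection onto `R` with bounded inverse of norm at most `C_R`
    (hHc : ∃ J : Nᗮ →L[ℂ] Nᗮ, ‖J‖ ≤ C_R ∧
      (∀ (x : A.domain) (hx : (x : H) ∈ Nᗮ),
        J (Submodule.orthogonalProjectionOnto Nᗮ (A x)) = ⟨(x : H), hx⟩) ∧
      (∀ y : Nᗮ, ∃ (x : A.domain) (hx : (x : H) ∈ Nᗮ),
        Submodule.orthogonalProjectionOnto Nᗮ (A x) = y))
    (T : H →L[ℂ] H)
    (ε : ℝ) (hε : ε ∈ Set.Ioo (0 : ℝ) (1 / (2 * C_R * ‖M‖))) :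
    ∃ (Binv : H →L[ℂ] H) (JN : N →L[ℂ] N),
      -- `Binv` is the bounded inverse of `B_ε = M + ε⁻¹ A`
      (∀ x : A.domain, Binv (M (x : H) + ε⁻¹ • A x) = x) ∧
      (∀ y : H, ∃ x : A.domain, M (x : H) + ε⁻¹ • A x = y) ∧
      -- `JN` is the bounded inverse of `B_{ε,N} = ι_N* M ι_N + ε⁻¹ ι_N* A ι_N` on `N`
      (∀ x : N,
        JN (Submodule.orthogonalProjectionOnto N (M (x : H))
            + ε⁻¹ • Submodule.orthogonalProjectionOnto N (A ⟨(x : H), hHa_sub x.2⟩)) = x) ∧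
      (∀ y : N, ∃ x : N,
        Submodule.orthogonalProjectionOnto N (M (x : H))
            + ε⁻¹ • Submodule.orthogonalProjectionOnto N (A ⟨(x : H), hHa_sub x.2⟩) = y) ∧
      -- the estimate
      ‖Binv - (N.subtypeL.comp (JN.comp (Submodule.orthogonalProjectionOnto N))
            + ε • (Nᗮ.subtypeL.comp (Submodule.orthogonalProjectionOnto Nᗮ)).comp
                (T.comp (Nᗮ.subtypeL.comp (Submodule.orthogonalProjectionOnto Nᗮ))))‖
        ≤ (2 * C_R * (1 + ‖M‖ / c) ^ 2
            + ‖(Submodule.orthogonalProjectionOnto Nᗮ).comp (T.comp Nᗮ.subtypeL)‖) * ε := by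
  obtain ⟨J, hJ_norm, hJ, -⟩ := hHc
  obtain ⟨S, J_N, hS, hJ_N, hle⟩ := statement11_general hc hM ⟨hA_dense, hA_skew⟩ hHb
    (fun v => hJ ⟨v, v.2⟩ v.1.2) T hε.1
  exact ⟨S, J_N, hS.apply_apply, hS.surjective, fun x => hJ_N.apply_apply ⟨x, hHa_sub x.2⟩,
    fun y => let ⟨x, hx⟩ := hJ_N.surjective y; ⟨x, hx⟩,
    hle.trans (by gcongr; exacts [hε.1.le, by linarith])⟩
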